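/- arXiv:2408.02488 — 2 statements merged into one kernel-verified Lean document; each statement's English description precedes it below -/
import Mathlib

section
/- Let n ≥ 3 and let G be an n-vertex graph with vertices {u₁,…,uₙ}. Suppose the vertex-deleted subgraph G−uₙ is almost controllable, and the matrix Q₀ = Q₀(G−uₙ) = I − 2ξξᵀ/(ξᵀξ) (where ξ is a nonzero vector with W(G−uₙ)ᵀξ = 0) is a permutation matrix. Then G is reconstructible. -/
open Matrix

open scoped Classical

noncomputable section

/-- The real adjacency matrix of a simple graph. -/
def adjMat {V : Type} [Fintype V] (G : SimpleGraph V) : Matrix V V ℝ :=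
  Matrix.of fun i j => if G.Adj i j then 1 else 0

/-- The walk matrix `W(G) = [e, Ae, …, A^{m-1}e]` of a square matrix `A`
(`m` = number of rows). -/
def walkMatrix {V : Type} [Fintype V] [DecidableEq V] (A : Matrix V V ℝ) :
    Matrix V (Fin (Fintype.card V)) ℝ :=
  Matrix.of fun i j => (A ^ (j : ℕ) *ᵥ fun _ => (1 : ℝ)) i

/-- A graph `G` is reconstructible if every graph with the same deck (i.e. every graph `H`
admitting a bijection `σ` of the vertices such that `G - v ≅ H - σ v` for all `v`) is
isomorphic to `G`. -/
def Reconstructible {n : ℕ} (G : SimpleGraph (Fin n)) : Prop :=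
  ∀ H : SimpleGraph (Fin n),
    (∃ σ : Equiv.Perm (Fin n),
      ∀ v : Fin n,
        Nonempty ((G.induce {w : Fin n | w ≠ v}) ≃g (H.induce {w : Fin n | w ≠ σ v}))) →
    Nonempty (G ≃g H)

/-- The Householder matrix `Q₀ = I - 2ξξᵀ/(ξᵀξ)` associated with a vector `ξ`. -/
def householder {m : ℕ} (ξ : Fin m → ℝ) : Matrix (Fin m) (Fin m) ℝ :=
  1 - (2 / (ξ ⬝ᵥ ξ)) • vecMulVec ξ ξ

/-- `Q` is a permutation matrix. -/
def IsPermMatrix {m : ℕ} (Q : Matrix (Fin m) (Fin m) ℝ) : Prop :=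
  ∃ σ : Equiv.Perm (Fin m), Q = Matrix.of fun i j => if σ j = i then (1 : ℝ) else 0

/-!
A graph `H` with the same deck as `G` may be relabelled so that it differs from `G` only in the
adjacencies of the last vertex; let `b` and `b'` be the adjacency vectors of that vertex in `G` and
in `H`, and let `A` be the adjacency matrix of the graph on the remaining `m` vertices. The
derivative of the characteristic polynomial of `A(G) + tJ` is the sum of those of the
vertex-deleted subgraphs, so the deck determines it. Expanding the bordered determinant and
comparing coefficients gives `bᵀ (A + tJ)ᵏ b = b'ᵀ (A + tJ)ᵏ b'` for `k ≤ m - 2`, with `b` and `b'`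
shifted by `te`; comparing `t = 0` with `t = 1` yields `(b - b')ᵀ Aᵏ e = 0` for `k ≤ m - 2`.

Since `rank W = m - 1`, the first `m - 1` columns of `W` already span its column space. Hence
`b - b'` is a multiple of `ξ`, and `ξ` is an eigenvector of `A`. As `b` and `b'` have the same
length, the reflection in the hyperplane orthogonal to `ξ` commutes with `A` and exchanges `b` and
`b'` (unless they are equal). When it is a permutation matrix, it is therefore an isomorphism
between `G` and `H`.
-/

section Charpoly

open Polynomial

variable {R n : Type*} [CommRing R] [Fintype n] [DecidableEq n]

lemma derivative_det (M : Matrix n n R[X]) :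
    derivative M.det = ∑ i, (M.updateCol i fun j => derivative (M j i)).det := by
  have derivative_diagonal_prod (σ : Equiv.Perm n) : derivative (∏ i, M (σ i) i) =
      ∑ i, ∏ j, M.updateCol i (fun k => derivative (M k i)) (σ j) j := by
    rw [derivative_prod_finset]
    refine Finset.sum_congr rfl fun i _ => ?_
    rw [← Finset.mul_prod_erase Finset.univ _ (Finset.mem_univ i), mul_comm, updateCol_self]
    congr 1
    exact Finset.prod_congr rfl fun j hj => by rw [updateCol_ne (Finset.ne_of_mem_erase hj)]
  simp only [det_apply']
  rw [Finset.sum_comm, derivative_sum]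
  refine Finset.sum_congr rfl fun σ _ => ?_
  rw [← Finset.mul_sum, ← derivative_diagonal_prod, derivative_intCast_mul]

lemma det_updateCol_single_self (M : Matrix n n R) (v : n) :
    (M.updateCol v (Pi.single v 1)).det = (M.toSquareBlockProp (· ≠ v)).det := by
  have minor : (M.updateCol v (Pi.single v 1)).toSquareBlockProp (· ≠ v) =
      M.toSquareBlockProp (· ≠ v) := by
    ext i j
    exact updateCol_ne j.2
  let _ : Unique {w // ¬w ≠ v} := ⟨⟨⟨v, by simp⟩⟩, fun w => Subtype.ext (not_not.1 w.2)⟩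
  have corner : ((M.updateCol v (Pi.single v 1)).toSquareBlockProp (¬· ≠ v)).det = 1 := by
    refine (det_unique _).trans ?_
    change M.updateCol v (Pi.single v 1) v v = 1
    simp
  rw [twoBlockTriangular_det' _ (· ≠ v), minor]
  · exact (congrArg _ corner).trans (mul_one _)
  · intro i hi j hj
    obtain rfl : j = v := not_not.1 hj
    rw [updateCol_self, Pi.single_eq_of_ne hi]

lemma derivative_charpoly (M : Matrix n n R) :
    derivative M.charpoly = ∑ v, (M.toSquareBlockProp (· ≠ v)).charpoly := by
  rw [charpoly, derivative_det]
  refine Finset.sum_congr rfl fun v _ => ?_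
  have derivative_col : (fun j => derivative (M.charmatrix j v)) = Pi.single v 1 := by
    ext1 j
    obtain rfl | hj := eq_or_ne j v
    · simp
    · simp [hj]
  have charmatrix_block : M.charmatrix.toSquareBlockProp (· ≠ v) =
      (M.toSquareBlockProp (· ≠ v)).charmatrix := by
    ext1 i j
    simp [toSquareBlockProp_def, charmatrix_apply, diagonal_apply, Subtype.ext_iff]
  rw [derivative_col, det_updateCol_single_self, charmatrix_block, charpoly]

lemma det_fromBlocks_of_unique {ι : Type*} [Unique ι] [Fintype ι] [DecidableEq ι]
    (P : Matrix n n R) (hP : IsLeftRegular P.det)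
    (U : Matrix n ι R) (V : Matrix ι n R) (D : Matrix ι ι R) :
    (fromBlocks P U V D).det =
      P.det * D default default - (V * (P.adjugate * U)) default default := by
  have elimination : fromBlocks P U V D * fromBlocks 1 (-(P.adjugate * U)) 0 (P.det • 1) =
      fromBlocks P 0 V (P.det • D - V * (P.adjugate * U)) := by
    rw [fromBlocks_multiply]
    congr 1
    · simp
    · rw [Matrix.mul_neg, ← Matrix.mul_assoc, mul_adjugate]
      simp
    · simp
    · rw [Matrix.mul_neg, Matrix.mul_smul, Matrix.mul_one]
      abel
  have h := congrArg det elimination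
  rw [det_mul, det_fromBlocks_zero₂₁, det_fromBlocks_zero₁₂, det_one, one_mul, mul_comm] at h
  simp only [det_unique, Matrix.smul_apply, one_apply_eq, smul_eq_mul, mul_one,
    Matrix.sub_apply] at h
  exact hP h

/-- The matrix obtained from `A` by bordering it with the vector `b`, as both an extra column and an
extra row, and the corner entry `β`. -/
def border {R n : Type*} (A : Matrix n n R) (b : n → R) (β : R) :
    Matrix (n ⊕ Fin 1) (n ⊕ Fin 1) R :=
  fromBlocks A (replicateCol (Fin 1) b) (replicateRow (Fin 1) b) (of fun _ _ => β)

lemma charpoly_border (A : Matrix n n R) (b : n → R) (β : R) :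
    (border A b β).charpoly =
      A.charpoly * (X - C β) - C ∘ b ⬝ᵥ A.charmatrix.adjugate *ᵥ (C ∘ b) := by
  rw [charpoly, border, charmatrix_fromBlocks,
    det_fromBlocks_of_unique _ (charpoly_monic A).isRegular.left]
  simp [charpoly, mul_apply, mulVec, dotProduct]

/-- The coefficient of `X ^ k` in the adjugate of `X - A`, as a matrix of scalars. -/
def adjugateCoeff (A : Matrix n n R) (k : ℕ) : Matrix n n R :=
  (matPolyEquiv A.charmatrix.adjugate).coeff k

lemma coeff_dotProduct_adjugate_mulVec (A : Matrix n n R) (b : n → R) (k : ℕ) :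
    (C ∘ b ⬝ᵥ A.charmatrix.adjugate *ᵥ (C ∘ b)).coeff k = b ⬝ᵥ adjugateCoeff A k *ᵥ b := by
  simp [adjugateCoeff, dotProduct, mulVec, matPolyEquiv_coeff_apply]

lemma adjugateCoeff_eq_add (A : Matrix n n R) (k : ℕ) :
    adjugateCoeff A k = A * adjugateCoeff A (k + 1) + A.charpoly.coeff (k + 1) • 1 := by
  have h : (X - C A) * matPolyEquiv A.charmatrix.adjugate =
      A.charpoly.map (algebraMap R (Matrix n n R)) := by
    rw [← matPolyEquiv_charmatrix, ← map_mul, mul_adjugate, ← matPolyEquiv_smul_one, charpoly]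
  replace h := congrArg (coeff · (k + 1)) h
  simp only [sub_mul, coeff_sub, coeff_X_mul, coeff_C_mul, coeff_map,
    Algebra.algebraMap_eq_smul_one] at h
  rw [← h, adjugateCoeff, adjugateCoeff]
  abel

lemma adjugateCoeff_eq_zero (A : Matrix n n R) {k : ℕ} (hk : Fintype.card n ≤ k) :
    adjugateCoeff A k = 0 := by
  nontriviality R
  -- Iterating the recurrence raises the index beyond the degree of the adjugate.
  have eq_pow_mul (j : ℕ) : adjugateCoeff A k = A ^ j * adjugateCoeff A (k + j) := by
    induction j with
    | zero => simp
    | succ j ih =>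
      have : A.charpoly.coeff (k + j + 1) = 0 :=
        coeff_eq_zero_of_natDegree_lt (by rw [charpoly_natDegree_eq_dim]; omega)
      rw [ih, adjugateCoeff_eq_add, this, zero_smul, add_zero, ← Matrix.mul_assoc, ← pow_succ,
        add_assoc]
  rw [eq_pow_mul ((matPolyEquiv A.charmatrix.adjugate).natDegree + 1),
    adjugateCoeff.eq_def A (_ + _), coeff_eq_zero_of_natDegree_lt (by omega), Matrix.mul_zero]

lemma adjugateCoeff_eq_one (A : Matrix n n R) {k : ℕ} (hk : k + 1 = Fintype.card n) :
    adjugateCoeff A k = 1 := by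
  nontriviality R
  have monic : A.charpoly.coeff (k + 1) = 1 := by
    rw [hk, ← A.charpoly_natDegree_eq_dim]
    exact A.charpoly_monic
  rw [adjugateCoeff_eq_add, adjugateCoeff_eq_zero A hk.ge, monic, Matrix.mul_zero, zero_add,
    one_smul]

lemma pow_mem_span_adjugateCoeff (A : Matrix n n R) {k : ℕ} (hk : k < Fintype.card n) :
    A ^ k ∈ Submodule.span R (adjugateCoeff A '' Set.Ici (Fintype.card n - (k + 1))) := by
  induction k with
  | zero =>
    refine Submodule.subset_span ⟨Fintype.card n - 1, ?_, ?_⟩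
    · grind
    · rw [adjugateCoeff_eq_one A (by omega), pow_zero]
  | succ k ih =>
    rw [pow_succ', ← LinearMap.mulLeft_apply R]
    refine (Submodule.map_span_le (LinearMap.mulLeft R A) _ _).2 ?_
      (Submodule.mem_map_of_mem (ih (by omega)))
    rintro _ ⟨j, hj, rfl⟩
    obtain ⟨j, rfl⟩ : ∃ i, j = i + 1 := Nat.exists_eq_add_one.2 (by grind)
    rw [LinearMap.mulLeft_apply, ← sub_eq_of_eq_add (adjugateCoeff_eq_add A j),
      ← adjugateCoeff_eq_one A (Nat.sub_add_cancel (by omega : 1 ≤ Fintype.card n))]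
    refine Submodule.sub_mem _ ?_ (Submodule.smul_mem _ _ ?_)
    · exact Submodule.subset_span ⟨j, by grind, rfl⟩
    · exact Submodule.subset_span ⟨_, by grind, rfl⟩

/-- The derivative forgets the constant coefficient of the characteristic polynomial, hence the
coefficient `0` of the adjugate; this is why `k = card n - 1` is not covered. -/
lemma dotProduct_pow_mulVec_eq_of_derivative_charpoly_border_eq [NoZeroDivisors R] [CharZero R]
    {A : Matrix n n R} {b c : n → R} {β : R}
    (h : derivative (border A b β).charpoly = derivative (border A c β).charpoly) {k : ℕ}
    (hk : k + 2 ≤ Fintype.card n) : b ⬝ᵥ A ^ k *ᵥ b = c ⬝ᵥ A ^ k *ᵥ c := by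
  let quadForm (v : n → R) : Matrix n n R →ₗ[R] R :=
    { toFun := fun B => v ⬝ᵥ B *ᵥ v
      map_add' := by simp [add_mulVec]
      map_smul' := by simp [smul_mulVec] }
  refine LinearMap.eqOn_span (f := quadForm b) (g := quadForm c) ?_
    (pow_mem_span_adjugateCoeff A (by omega : k < Fintype.card n))
  rintro _ ⟨j, hj, rfl⟩
  obtain ⟨j, rfl⟩ : ∃ i, j = i + 1 := Nat.exists_eq_add_one.2 (by grind)
  have coeff_eq := congrArg (coeff · j) h
  simp only [coeff_derivative] at coeff_eq
  replace coeff_eq := mul_right_cancel₀ (Nat.cast_add_one_ne_zero j) coeff_eq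
  rwa [charpoly_border, charpoly_border, coeff_sub, coeff_sub, sub_right_inj,
    coeff_dotProduct_adjugate_mulVec, coeff_dotProduct_adjugate_mulVec] at coeff_eq

end Charpoly

section Krylov

variable {K n : Type*} [Field K] [Fintype n]

lemma exists_smul_eq_of_transpose_mulVec_eq_zero {m : Type*} [Fintype m] {W : Matrix m n K}
    (hW : W.rank + 1 = Fintype.card m) {ξ d : m → K} (hξ : ξ ≠ 0) (hξW : Wᵀ *ᵥ ξ = 0)
    (hdW : Wᵀ *ᵥ d = 0) : ∃ s : K, s • ξ = d := by
  have rank_nullity := Wᵀ.mulVecLin.finrank_range_add_finrank_ker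
  rw [← Matrix.rank, rank_transpose, Module.finrank_fintype_fun_eq_card, ← hW,
    Nat.add_left_cancel_iff] at rank_nullity
  let ξ' : LinearMap.ker Wᵀ.mulVecLin := ⟨ξ, hξW⟩
  have hξ' : ξ' ≠ 0 := fun h => hξ (congrArg Subtype.val h)
  obtain ⟨s, hs⟩ := (finrank_eq_one_iff_of_nonzero' ξ' hξ').1 rank_nullity ⟨d, hdW⟩
  exact ⟨s, congrArg Subtype.val hs⟩

variable [DecidableEq n]

open Polynomial in
lemma pow_mulVec_mem_span_of_aeval_mulVec_eq_zero (A : Matrix n n K) (u : n → K) {q : K[X]}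
    (hq : q ≠ 0) (hqu : aeval A q *ᵥ u = 0) (k : ℕ) :
    A ^ k *ᵥ u ∈ Submodule.span K ((fun i => A ^ i *ᵥ u) '' Set.Iio q.natDegree) := by
  have pow_mulVec_eq : A ^ k *ᵥ u = aeval A (X ^ k % q) *ᵥ u := by
    conv_lhs =>
      rw [← aeval_X_pow (R := K) (x := A) (n := k), ← EuclideanDomain.div_add_mod (X ^ k) q]
    rw [map_add, add_mulVec, mul_comm, map_mul, ← mulVec_mulVec, hqu, mulVec_zero, zero_add]
  rw [pow_mulVec_eq, aeval_eq_sum_range, sum_mulVec]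
  refine Submodule.sum_mem _ fun i _ => ?_
  rw [smul_mulVec]
  obtain hi | hi := lt_or_ge i q.natDegree
  · exact Submodule.smul_mem _ _ (Submodule.subset_span ⟨i, hi, rfl⟩)
  · have : (X ^ k % q).coeff i = 0 := coeff_eq_zero_of_degree_lt <|
      (EuclideanDomain.mod_lt _ hq).trans_le (degree_le_of_natDegree_le hi)
    rw [this, zero_smul]
    exact Submodule.zero_mem _

end Krylov

section WalkMatrix

variable {V : Type} [Fintype V] [DecidableEq V] {A : Matrix V V ℝ}

lemma transpose_walkMatrix_mulVec_eq_zero_iff {d : V → ℝ} :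
    (walkMatrix A)ᵀ *ᵥ d = 0 ↔ ∀ k < Fintype.card V, d ⬝ᵥ A ^ k *ᵥ 1 = 0 := by
  simp only [funext_iff, Fin.forall_iff, dotProduct_comm d]
  rfl

open Polynomial in
lemma exists_aeval_mulVec_one_eq_zero (h : (walkMatrix A).rank < Fintype.card V) :
    ∃ q : ℝ[X], q ≠ 0 ∧ q.degree < Fintype.card V ∧ aeval A q *ᵥ 1 = 0 := by
  have dependent : ¬LinearIndependent ℝ (walkMatrix A)ᵀ.row := fun hli =>
    h.ne (by rw [← rank_transpose, hli.rank_matrix, Fintype.card_fin])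
  obtain ⟨a, relation, j, hj⟩ := Fintype.not_linearIndependent_iff.1 dependent
  let q := (degreeLTEquiv ℝ (Fintype.card V)).symm a
  refine ⟨q, ?_, mem_degreeLT.1 q.2, ?_⟩
  · rw [Ne, Submodule.coe_eq_zero, LinearEquiv.map_eq_zero_iff]
    exact fun ha => hj (congrFun ha j)
  · have : (q : ℝ[X]) = ∑ i : Fin (Fintype.card V), monomial (i : ℕ) (a i) := rfl
    rw [this, map_sum, sum_mulVec, ← relation]
    refine Finset.sum_congr rfl fun i _ => ?_
    rw [aeval_monomial, ← Algebra.smul_def, smul_mulVec]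
    rfl

lemma transpose_walkMatrix_mulVec_eq_zero_of_rank_lt (h : (walkMatrix A).rank < Fintype.card V)
    {d : V → ℝ} (hd : ∀ k, k + 2 ≤ Fintype.card V → d ⬝ᵥ A ^ k *ᵥ 1 = 0) :
    (walkMatrix A)ᵀ *ᵥ d = 0 := by
  obtain ⟨q, hq, q_degree, hqA⟩ := exists_aeval_mulVec_one_eq_zero h
  rw [← Polynomial.natDegree_lt_iff_degree_lt hq] at q_degree
  refine transpose_walkMatrix_mulVec_eq_zero_iff.2 fun k _ => ?_
  refine Submodule.span_induction (p := fun w _ => d ⬝ᵥ w = 0) ?_ ?_ ?_ ?_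
    (pow_mulVec_mem_span_of_aeval_mulVec_eq_zero A 1 hq hqA k)
  · rintro _ ⟨i, hi, rfl⟩
    exact hd i (by grind)
  · exact dotProduct_zero d
  · intro v w _ _ hv hw
    rw [dotProduct_add, hv, hw, add_zero]
  · intro s v _ hv
    rw [dotProduct_smul, hv, smul_zero]

end WalkMatrix

section Moments

variable {R n : Type*} [CommRing R] [Fintype n]

lemma dotProduct_mulVec_add_eq_zero {B : Matrix n n R} (hB : B.IsSymm) {b c : n → R}
    (h : b ⬝ᵥ B *ᵥ b = c ⬝ᵥ B *ᵥ c) : (b - c) ⬝ᵥ B *ᵥ (b + c) = 0 := by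
  have comm : b ⬝ᵥ B *ᵥ c = c ⬝ᵥ B *ᵥ b := by
    rw [dotProduct_mulVec, ← mulVec_transpose, hB.eq, dotProduct_comm]
  rw [mulVec_add, sub_dotProduct, dotProduct_add, dotProduct_add, h, comm]
  ring

variable [DecidableEq n]

lemma vecMul_add_pow_of_forall_lt {A N : Matrix n n R} {d : n → R} {k : ℕ}
    (h : ∀ j < k, d ᵥ* A ^ j ᵥ* N = 0) : d ᵥ* (A + N) ^ k = d ᵥ* A ^ k := by
  induction k with
  | zero => simp
  | succ k ih =>
    rw [pow_succ, ← vecMul_vecMul, ih fun j hj => h j (by omega), vecMul_add, h k (by omega),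
      add_zero, vecMul_vecMul, ← pow_succ]

lemma dotProduct_pow_mulVec_eq_zero_of_add_vecMulVec [NoZeroDivisors R] [NeZero (2 : R)]
    {A : Matrix n n R} (hA : A.IsSymm) {u b c : n → R} {N : ℕ}
    (h : ∀ k < N, b ⬝ᵥ A ^ k *ᵥ b = c ⬝ᵥ A ^ k *ᵥ c)
    (h' : ∀ k < N, (b + u) ⬝ᵥ (A + vecMulVec u u) ^ k *ᵥ (b + u) =
      (c + u) ⬝ᵥ (A + vecMulVec u u) ^ k *ᵥ (c + u)) {k : ℕ} (hk : k < N) :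
    (b - c) ⬝ᵥ A ^ k *ᵥ u = 0 := by
  induction k using Nat.strong_induction_on with
  | _ k ih =>
  -- The vanishing for exponents below `k` hides the rank-one perturbation from `b - c` up to the
  -- `k`-th power, so the two hypotheses at `k` differ only by `2 * ((b - c) ⬝ᵥ A ^ k *ᵥ u)`.
  have vecMul_pow : (b - c) ᵥ* (A + vecMulVec u u) ^ k = (b - c) ᵥ* A ^ k :=
    vecMul_add_pow_of_forall_lt fun j hj => by
      rw [vecMul_vecMulVec, ← dotProduct_mulVec, ih j hj (hj.trans hk), zero_smul]
  have symm : (A + vecMulVec u u).IsSymm := hA.add (transpose_vecMulVec u u)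
  have sum_unperturbed := dotProduct_mulVec_add_eq_zero (hA.pow k) (h k hk)
  have sum_perturbed := dotProduct_mulVec_add_eq_zero (symm.pow k) (h' k hk)
  rw [add_sub_add_right_eq_sub, dotProduct_mulVec, vecMul_pow, ← dotProduct_mulVec,
    add_add_add_comm, mulVec_add, dotProduct_add, sum_unperturbed, zero_add, ← two_smul R u,
    mulVec_smul, dotProduct_smul, smul_eq_mul] at sum_perturbed
  exact (mul_eq_zero.1 sum_perturbed).resolve_left two_ne_zero

end Moments

section Householder

lemma exists_mulVec_eq_smul_of_transpose_walkMatrix_mulVec_eq_zero {V : Type} [Fintype V]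
    [DecidableEq V] {A : Matrix V V ℝ} (hA : A.IsSymm)
    (hrank : (walkMatrix A).rank + 1 = Fintype.card V) {ξ : V → ℝ} (hξ : ξ ≠ 0)
    (hξW : (walkMatrix A)ᵀ *ᵥ ξ = 0) : ∃ l : ℝ, A *ᵥ ξ = l • ξ := by
  have mulVec_orthogonal : (walkMatrix A)ᵀ *ᵥ (A *ᵥ ξ) = 0 := by
    refine transpose_walkMatrix_mulVec_eq_zero_of_rank_lt (by omega) fun k hk => ?_
    rw [← hA.eq, mulVec_transpose, hA.eq, ← dotProduct_mulVec, mulVec_mulVec, ← pow_succ']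
    exact transpose_walkMatrix_mulVec_eq_zero_iff.1 hξW (k + 1) (by omega)
  obtain ⟨l, hl⟩ := exists_smul_eq_of_transpose_mulVec_eq_zero hrank hξ hξW mulVec_orthogonal
  exact ⟨l, hl.symm⟩

variable {m : ℕ} {A : Matrix (Fin m) (Fin m) ℝ} {ξ b c : Fin m → ℝ}

lemma commute_householder (hA : A.IsSymm) {l : ℝ} (hl : A *ᵥ ξ = l • ξ) :
    Commute (householder ξ) A := by
  have vecMul_eq : ξ ᵥ* A = l • ξ := by rw [← mulVec_transpose, hA.eq, hl]
  refine (Commute.one_left A).sub_left (Commute.smul_left ?_ _)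
  rw [commute_iff_eq, vecMulVec_mul, mul_vecMulVec, hl, vecMul_eq, vecMulVec_smul, smul_vecMulVec]

lemma householder_mulVec_eq {s : ℝ} (hs : s • ξ = b - c) (hne : b ≠ c) (h : b ⬝ᵥ b = c ⬝ᵥ c) :
    householder ξ *ᵥ b = c := by
  have s_smul_ne : s • ξ ≠ 0 := hs ▸ sub_ne_zero.2 hne
  obtain ⟨hs₀, hξ⟩ := smul_ne_zero_iff.1 s_smul_ne
  have norm_ne : ξ ⬝ᵥ ξ ≠ 0 := dotProduct_self_eq_zero.not.2 hξ
  have polarization : (s • ξ) ⬝ᵥ (s • ξ) = 2 * ((s • ξ) ⬝ᵥ b) := by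
    rw [hs, dotProduct_sub, sub_dotProduct, sub_dotProduct, dotProduct_comm b c, h]
    ring
  have projection : 2 / (ξ ⬝ᵥ ξ) * (ξ ⬝ᵥ b) = s := by
    simp only [smul_dotProduct, dotProduct_smul, smul_eq_mul] at polarization
    rw [div_mul_eq_mul_div, div_eq_iff norm_ne]
    exact mul_left_cancel₀ hs₀ (by linarith)
  rw [householder, sub_mulVec, one_mulVec, smul_mulVec, vecMulVec_mulVec, op_smul_eq_smul,
    smul_smul, projection, hs, sub_sub_cancel]

lemma IsPermMatrix.exists_eq_permMatrix {Q : Matrix (Fin m) (Fin m) ℝ} (hQ : IsPermMatrix Q) :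
    ∃ π : Equiv.Perm (Fin m), Q = π.permMatrix ℝ := by
  obtain ⟨σ, rfl⟩ := hQ
  refine ⟨σ⁻¹, ?_⟩
  ext i j
  simp [PEquiv.toMatrix_apply, Equiv.Perm.inv_def, Equiv.eq_symm_apply, eq_comm]

lemma submatrix_eq_of_commute_permMatrix {R n : Type*} [CommRing R] [Fintype n] [DecidableEq n]
    {M : Matrix n n R} {π : Equiv.Perm n} (h : Commute (π.permMatrix R) M) :
    M.submatrix π π = M := by
  rw [commute_iff_eq, Equiv.Perm.permMatrix, PEquiv.toMatrix_toPEquiv_mul,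
    PEquiv.mul_toMatrix_toPEquiv] at h
  ext i j
  simpa using congrFun₂ h i (π j)

lemma exists_perm_submatrix_eq_and_comp_eq (hA : A.IsSymm)
    (hrank : (walkMatrix A).rank + 1 = Fintype.card (Fin m)) (hξ : ξ ≠ 0)
    (hξW : (walkMatrix A)ᵀ *ᵥ ξ = 0) (hperm : IsPermMatrix (householder ξ))
    (hbc : b ⬝ᵥ b = c ⬝ᵥ c) (hbcW : (walkMatrix A)ᵀ *ᵥ (b - c) = 0) :
    ∃ π : Equiv.Perm (Fin m), A.submatrix π π = A ∧ b ∘ π = c := by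
  obtain rfl | hne := eq_or_ne b c
  · exact ⟨1, rfl, rfl⟩
  obtain ⟨l, hl⟩ := exists_mulVec_eq_smul_of_transpose_walkMatrix_mulVec_eq_zero hA hrank hξ hξW
  obtain ⟨s, hs⟩ := exists_smul_eq_of_transpose_mulVec_eq_zero hrank hξ hξW hbcW
  obtain ⟨π, hπ⟩ := hperm.exists_eq_permMatrix
  refine ⟨π, submatrix_eq_of_commute_permMatrix (hπ ▸ commute_householder hA hl), ?_⟩
  rw [← permMatrix_mulVec, ← hπ, householder_mulVec_eq hs hne hbc]

end Householder

section AdjMat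

variable {V W : Type} [Fintype V] [Fintype W] {G : SimpleGraph V} {H : SimpleGraph W}

lemma isSymm_adjMat (G : SimpleGraph V) : (adjMat G).IsSymm := by
  ext i j
  simp [adjMat, G.adj_comm]

lemma adj_iff_of_submatrix_adjMat_eq {π : Equiv.Perm V} (h : (adjMat G).submatrix π π = adjMat G)
    (i j : V) : G.Adj (π i) (π j) ↔ G.Adj i j := by
  have := congrFun₂ h i j
  simp only [adjMat, submatrix_apply, of_apply] at this
  grind

/-- The generalized adjacency matrix `A(G) + tJ`, with `J` the all-ones matrix. -/
def generalizedAdjMat (G : SimpleGraph V) (t : ℝ) : Matrix V V ℝ :=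
  adjMat G + t • vecMulVec 1 1

lemma generalizedAdjMat_apply (t : ℝ) (i j : V) :
    generalizedAdjMat G t i j = (if G.Adj i j then 1 else 0) + t := by
  simp [generalizedAdjMat, adjMat]

lemma charpoly_generalizedAdjMat_congr [DecidableEq V] [DecidableEq W] (f : G ≃g H) (t : ℝ) :
    (generalizedAdjMat G t).charpoly = (generalizedAdjMat H t).charpoly := by
  have reindexed : reindex f.toEquiv f.toEquiv (generalizedAdjMat G t) = generalizedAdjMat H t := by
    ext i j
    have adj_symm : G.Adj (f.toEquiv.symm i) (f.toEquiv.symm j) ↔ H.Adj i j := f.symm.map_adj_iff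
    simp [generalizedAdjMat_apply, adj_symm]
  rw [← reindexed, charpoly_reindex]

lemma derivative_charpoly_generalizedAdjMat [DecidableEq V] (G : SimpleGraph V) (t : ℝ) :
    Polynomial.derivative (generalizedAdjMat G t).charpoly =
      ∑ v, (generalizedAdjMat (G.induce {w | w ≠ v}) t).charpoly := by
  rw [derivative_charpoly]
  refine Finset.sum_congr rfl fun v _ => congrArg charpoly ?_
  ext i j
  simp [toSquareBlockProp_def, generalizedAdjMat_apply]

lemma derivative_charpoly_generalizedAdjMat_congr [DecidableEq V] [DecidableEq W] (σ : V ≃ W)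
    (h : ∀ v, Nonempty (G.induce {w | w ≠ v} ≃g H.induce {w | w ≠ σ v})) (t : ℝ) :
    Polynomial.derivative (generalizedAdjMat G t).charpoly =
      Polynomial.derivative (generalizedAdjMat H t).charpoly := by
  rw [derivative_charpoly_generalizedAdjMat, derivative_charpoly_generalizedAdjMat, ← σ.sum_comp]
  refine Finset.sum_congr rfl fun v _ => ?_
  obtain ⟨f⟩ := h v
  exact charpoly_generalizedAdjMat_congr f t

end AdjMat

section LastVertex

open Polynomial

variable {m : ℕ} {G H : SimpleGraph (Fin (m + 1))}

/-- The adjacency vector of the last vertex: together with the graph induced on the other vertices,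
it determines `G`. -/
def lastAdjVec (G : SimpleGraph (Fin (m + 1))) : Fin m → ℝ :=
  fun i => if G.Adj i.castSucc (Fin.last m) then 1 else 0

lemma reindex_generalizedAdjMat_eq_border (G : SimpleGraph (Fin (m + 1))) (t : ℝ) :
    reindex finSumFinEquiv.symm finSumFinEquiv.symm (generalizedAdjMat G t) =
      border (generalizedAdjMat (G.comap Fin.castSucc) t) (lastAdjVec G + t • 1) t := by
  have natAdd_eq_last (i : Fin 1) : Fin.natAdd m i = Fin.last m := by ext; simp
  ext (i | i) (j | j)
  · simp [border, generalizedAdjMat_apply, Fin.castSucc]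
  · simp [border, generalizedAdjMat_apply, lastAdjVec, natAdd_eq_last, Fin.castSucc]
  · simp [border, generalizedAdjMat_apply, lastAdjVec, natAdd_eq_last, Fin.castSucc, G.adj_comm]
  · simp [border, generalizedAdjMat_apply, natAdd_eq_last]

lemma dotProduct_pow_mulVec_lastAdjVec_eq (hGH : G.comap Fin.castSucc = H.comap Fin.castSucc)
    {t : ℝ} (h : derivative (generalizedAdjMat G t).charpoly =
      derivative (generalizedAdjMat H t).charpoly) {k : ℕ} (hk : k + 2 ≤ m) :
    (lastAdjVec G + t • 1) ⬝ᵥ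
        generalizedAdjMat (G.comap Fin.castSucc) t ^ k *ᵥ (lastAdjVec G + t • 1) =
      (lastAdjVec H + t • 1) ⬝ᵥ
        generalizedAdjMat (G.comap Fin.castSucc) t ^ k *ᵥ (lastAdjVec H + t • 1) := by
  rw [← charpoly_reindex finSumFinEquiv.symm (generalizedAdjMat G t),
    ← charpoly_reindex finSumFinEquiv.symm (generalizedAdjMat H t),
    reindex_generalizedAdjMat_eq_border, reindex_generalizedAdjMat_eq_border, ← hGH] at h
  exact dotProduct_pow_mulVec_eq_of_derivative_charpoly_border_eq h (by simpa using hk)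

lemma dotProduct_pow_mulVec_one_eq_zero (hGH : G.comap Fin.castSucc = H.comap Fin.castSucc)
    (h : ∀ t, derivative (generalizedAdjMat G t).charpoly =
      derivative (generalizedAdjMat H t).charpoly) {k : ℕ} (hk : k + 2 ≤ m) :
    (lastAdjVec G - lastAdjVec H) ⬝ᵥ adjMat (G.comap Fin.castSucc) ^ k *ᵥ 1 = 0 := by
  refine dotProduct_pow_mulVec_eq_zero_of_add_vecMulVec (N := m - 1) (isSymm_adjMat _)
    (fun j hj => ?_) (fun j hj => ?_) (by omega)
  · simpa [generalizedAdjMat] using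
      dotProduct_pow_mulVec_lastAdjVec_eq hGH (h 0) (by omega : j + 2 ≤ m)
  · simpa [generalizedAdjMat] using
      dotProduct_pow_mulVec_lastAdjVec_eq hGH (h 1) (by omega : j + 2 ≤ m)

lemma nonempty_iso_of_lastAdjVec_comp_eq (hGH : G.comap Fin.castSucc = H.comap Fin.castSucc)
    {π : Equiv.Perm (Fin m)}
    (hπ : (adjMat (G.comap Fin.castSucc)).submatrix π π = adjMat (G.comap Fin.castSucc))
    (hπ' : lastAdjVec G ∘ π = lastAdjVec H) : Nonempty (G ≃g H) := by
  have adj_castSucc (i j : Fin m) :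
      G.Adj (π i).castSucc (π j).castSucc ↔ H.Adj i.castSucc j.castSucc :=
    (adj_iff_of_submatrix_adjMat_eq hπ i j).trans <|
      iff_of_eq (congrFun₂ (congrArg SimpleGraph.Adj hGH) i j)
  have adj_last (i : Fin m) :
      G.Adj (π i).castSucc (Fin.last m) ↔ H.Adj i.castSucc (Fin.last m) := by
    have := congrFun hπ' i
    simp only [lastAdjVec, Function.comp_apply] at this
    grind
  let ρ : Fin (m + 1) ≃ Fin (m + 1) :=
    finSuccEquivLast.trans (π.optionCongr.trans finSuccEquivLast.symm)
  have ρ_castSucc (i : Fin m) : ρ i.castSucc = (π i).castSucc := by simp [ρ]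
  have ρ_last : ρ (Fin.last m) = Fin.last m := by simp [ρ]
  refine ⟨RelIso.symm ⟨ρ, fun {i j} => ?_⟩⟩
  cases i using Fin.lastCases <;> cases j using Fin.lastCases <;>
    simp [ρ_castSucc, ρ_last, adj_castSucc, adj_last, G.adj_comm (Fin.last m),
      H.adj_comm (Fin.last m)]

lemma exists_iso_comap_castSucc_eq {v : Fin (m + 1)}
    (f : G.induce {w | w ≠ Fin.last m} ≃g H.induce {w | w ≠ v}) :
    ∃ H' : SimpleGraph (Fin (m + 1)),
      Nonempty (H' ≃g H) ∧ G.comap Fin.castSucc = H'.comap Fin.castSucc := by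
  let τ : Equiv.Perm (Fin (m + 1)) := Equiv.extendSubtype f.toEquiv
  have τ_castSucc (i : Fin m) : τ i.castSucc = f ⟨i.castSucc, Fin.castSucc_ne_last i⟩ :=
    Equiv.extendSubtype_apply_of_mem f.toEquiv i.castSucc (Fin.castSucc_ne_last i)
  refine ⟨H.comap τ, ⟨SimpleGraph.Iso.comap τ H⟩, ?_⟩
  ext i j
  rw [SimpleGraph.comap_adj, SimpleGraph.comap_adj, SimpleGraph.comap_adj, τ_castSucc, τ_castSucc]
  exact (f.map_adj_iff (v := ⟨_, Fin.castSucc_ne_last i⟩) (w := ⟨_, Fin.castSucc_ne_last j⟩)).symm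

end LastVertex

/-- Theorem 9 (i). Let `n = m + 1 ≥ 3` and let `G` be a graph on
`{u₁, …, uₙ} = Fin (m+1)`. If `G - uₙ` (the induced subgraph on the first `m` vertices) is
almost controllable and its Householder matrix `Q₀(G - uₙ)` is a permutation matrix, then `G`
is reconstructible. -/
theorem reconstructible_of_almost_controllable_symmetric
    {m : ℕ} (hn : 3 ≤ m + 1) (G : SimpleGraph (Fin (m + 1)))
    (hac : (walkMatrix (adjMat (G.comap (Fin.castSucc : Fin m → Fin (m + 1))))).rank = m - 1)
    (ξ : Fin m → ℝ) (hξ : ξ ≠ 0)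
    (hker : (walkMatrix (adjMat (G.comap (Fin.castSucc : Fin m → Fin (m + 1)))))ᵀ *ᵥ ξ = 0)
    (hperm : IsPermMatrix (householder ξ)) :
    Reconstructible G := by
  rintro H ⟨σ, hσ⟩
  obtain ⟨f⟩ := hσ (Fin.last m)
  obtain ⟨H', ⟨g⟩, hGH'⟩ := exists_iso_comap_castSucc_eq f
  have derivative_eq (t : ℝ) : Polynomial.derivative (generalizedAdjMat G t).charpoly =
      Polynomial.derivative (generalizedAdjMat H' t).charpoly := by
    rw [derivative_charpoly_generalizedAdjMat_congr σ hσ, charpoly_generalizedAdjMat_congr g]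
  have rank_eq : (walkMatrix (adjMat (G.comap Fin.castSucc))).rank + 1 = Fintype.card (Fin m) := by
    rw [hac, Fintype.card_fin]
    omega
  have norm_eq : lastAdjVec G ⬝ᵥ lastAdjVec G = lastAdjVec H' ⬝ᵥ lastAdjVec H' := by
    simpa using dotProduct_pow_mulVec_lastAdjVec_eq hGH' (derivative_eq 0) (by omega : 0 + 2 ≤ m)
  have sub_orthogonal : (walkMatrix (adjMat (G.comap Fin.castSucc)))ᵀ *ᵥ
      (lastAdjVec G - lastAdjVec H') = 0 :=
    transpose_walkMatrix_mulVec_eq_zero_of_rank_lt (by omega) fun k hk =>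
      dotProduct_pow_mulVec_one_eq_zero hGH' derivative_eq (Fintype.card_fin m ▸ hk)
  obtain ⟨π, hπ, hπ'⟩ :=
    exists_perm_submatrix_eq_and_comp_eq (isSymm_adjMat _) rank_eq hξ hker hperm norm_eq
      sub_orthogonal
  obtain ⟨f'⟩ := nonempty_iso_of_lastAdjVec_comp_eq hGH' hπ hπ'
  exact ⟨f'.trans g⟩
end
end

section
/- Let n ≥ 3 and let G be an n-vertex graph with vertices {u₁,…,uₙ}. Suppose the vertex-deleted subgraph G−uₙ is almost controllable, let Q₀ = Q₀(G−uₙ) = I − 2ξξᵀ/(ξᵀξ) (where ξ is a nonzero vector with W(G−uₙ)ᵀξ = 0), and let b ∈ {0,1}^{n−1} be the indicator vector of the neighborhood of uₙ in G. If Q₀ is not a permutation matrix and Q₀b ∉ {0,1}^{n−1}∖{b} (i.e., Q₀b is not a (0,1)-vector different from b), then G is reconstructible. -/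
open Matrix

open scoped Classical

noncomputable section

/-!
By Kelly's lemma the deck determines the number of homomorphisms from every graph with fewer
vertices than `G`, in particular from paths and cycles, hence the sums of entries of `Aᵏ` for
`k < n - 1` and the traces of `Aᵏ` for `k < n`. If `H` has the same deck as `G`, we may assume that
`G` and `H` are obtained from the same graph, with adjacency matrix `A`, by adding one vertex, with
neighbourhood vectors `b` and `c`. The trace of the resolvent of the bordered matrix depends on `b`
through the logarithmic derivative of the Schur complement `D = 1 - X² bᵀ(1 - X A)⁻¹b`, and its sum
of entries through `D⁻¹ (1 + X eᵀ(1 - X A)⁻¹b)²`. Comparing coefficients for `b` and `c` gives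
`eᵀAᵏ(b - c) = 0` for `k < n - 2`. Since the walk matrix of `A` does not have full rank, its
columns `Aᵏe` with `k < n - 2` already span its column space, so `b - c` is orthogonal to all of it,
i.e. a multiple of `ξ`. As `b` and `c` are `(0,1)`-vectors with `eᵀb = eᵀc`, they have the same
norm, so `c` is `b` or its reflection `Q₀b`, which is a `(0,1)`-vector only if it equals `b` too.
-/

/-! ### Counting homomorphisms from the deck -/

section Deck

variable {α U V W : Type*}

/-- Two graphs have the same deck if some bijection of their vertices matches isomorphic
vertex-deleted subgraphs; unlike in `Reconstructible`, the vertex types may differ. -/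
def SameDeck (G : SimpleGraph V) (H : SimpleGraph W) : Prop :=
  ∃ σ : V ≃ W, ∀ v, Nonempty (G.induce {w | w ≠ v} ≃g H.induce {w | w ≠ σ v})

theorem SameDeck.trans {G : SimpleGraph U} {H : SimpleGraph V} {K : SimpleGraph W}
    (hGH : SameDeck G H) (hHK : SameDeck H K) : SameDeck G K := by
  obtain ⟨σ, hσ⟩ := hGH
  obtain ⟨τ, hτ⟩ := hHK
  exact ⟨σ.trans τ, fun v => ⟨(hσ v).some.trans (hτ (σ v)).some⟩⟩

theorem sameDeck_of_iso {G : SimpleGraph V} {H : SimpleGraph W} (φ : G ≃g H) : SameDeck G H :=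
  ⟨φ.toEquiv, fun v => ⟨{
    toEquiv := φ.toEquiv.subtypeEquiv fun w => by simp
    map_rel_iff' := φ.map_adj_iff }⟩⟩

theorem SameDeck.exists_equiv_comap_some_eq {G : SimpleGraph V} {H : SimpleGraph W}
    (h : SameDeck G H) (e : Option U ≃ V) :
    ∃ e' : Option U ≃ W, (H.comap e').comap some = (G.comap e).comap some := by
  obtain ⟨σ, hσ⟩ := h
  obtain ⟨φ⟩ := hσ (e none)
  let f : U ≃ {w // w ≠ e none} := Equiv.optionSubtype (e none) ⟨e, rfl⟩
  refine ⟨(Equiv.optionSubtype (σ (e none))).symm (f.trans φ.toEquiv), ?_⟩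
  ext i j
  exact φ.map_adj_iff (v := f i) (w := f j)

instance homFintype [Finite V] [Finite W] (G : SimpleGraph V) (H : SimpleGraph W) :
    Fintype (G →g H) :=
  Fintype.ofFinite _

/-- Homomorphisms into an induced subgraph are the homomorphisms with values in its vertex set. -/
def homInduceEquiv (F : SimpleGraph α) (G : SimpleGraph V) (s : Set V) :
    (F →g G.induce s) ≃ {f : F →g G // ∀ x, f x ∈ s} where
  toFun f := ⟨(SimpleGraph.Embedding.induce s).toHom.comp f, fun x => (f x).2⟩
  invFun f := ⟨fun x => ⟨f.1 x, f.2 x⟩, f.1.map_rel⟩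

/-- The number of homomorphisms `f : F →g G`, each weighted by `1 / (n - |range f|)`. For
`n = |V|` this compensates for `f` surviving in the vertex-deleted subgraphs `G - v` with
`v ∉ range f`. It is meant for `|range f| < n`, as `1 / 0 = 0`. -/
def weightedHomCount [Finite α] [Finite V] (n : ℕ) (F : SimpleGraph α) (G : SimpleGraph V) : ℚ :=
  ∑ f : F →g G, ((n : ℚ) - (Set.range f).ncard)⁻¹

theorem weightedHomCount_congr [Finite α] [Finite V] [Finite W] {G : SimpleGraph V}
    {H : SimpleGraph W} (n : ℕ) (F : SimpleGraph α) (φ : G ≃g H) :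
    weightedHomCount n F G = weightedHomCount n F H := by
  let ψ : (F →g G) ≃ (F →g H) :=
    { toFun := φ.toHom.comp
      invFun := φ.symm.toHom.comp
      left_inv := fun f => by ext; simp
      right_inv := fun f => by ext; simp }
  refine Fintype.sum_equiv ψ _ _ fun f => ?_
  have hrange : Set.range (ψ f) = φ '' Set.range f := Set.range_comp φ f
  rw [hrange, Set.ncard_image_of_injective _ φ.injective]

theorem weightedHomCount_induce [Finite α] [Finite V] (n : ℕ) (F : SimpleGraph α)
    (G : SimpleGraph V) (v : V) :
    weightedHomCount n F (G.induce {w | w ≠ v}) =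
      ∑ f ∈ {f : F →g G | v ∉ Set.range f}, ((n : ℚ) - (Set.range f).ncard)⁻¹ := by
  rw [Finset.sum_subtype (p := fun f : F →g G => ∀ x, f x ∈ {w | w ≠ v}) _ (by simp)]
  refine Fintype.sum_equiv (homInduceEquiv F G _) _ _ fun f => ?_
  have hrange : Set.range (homInduceEquiv F G _ f).1 = Subtype.val '' Set.range f :=
    Set.range_comp Subtype.val f
  rw [hrange, Set.ncard_image_of_injective _ Subtype.val_injective]

-- Kelly's lemma: `f` is counted in the `|V| - |range f|` cards that avoid its range.
theorem cast_card_hom_eq_sum_weightedHomCount [Finite α] [Fintype V] (F : SimpleGraph α)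
    (G : SimpleGraph V) (h : Nat.card α < Fintype.card V) :
    (Nat.card (F →g G) : ℚ) =
      ∑ v, weightedHomCount (Fintype.card V) F (G.induce {w | w ≠ v}) := by
  have hweight (f : F →g G) :
      ∑ v with v ∉ Set.range f, ((Fintype.card V : ℚ) - (Set.range f).ncard)⁻¹ = 1 := by
    have hlt : (Set.range f).ncard < Fintype.card V := (Finite.card_range_le f).trans_lt h
    have hcard : (Finset.univ.filter (· ∉ Set.range f)).card =
        Fintype.card V - (Set.range f).ncard := by
      rw [← Nat.card_eq_fintype_card, ← Set.ncard_compl, Set.ncard_eq_toFinset_card']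
      congr 1
      ext v
      simp
    rw [Finset.sum_const, hcard, nsmul_eq_mul, Nat.cast_sub hlt.le]
    exact mul_inv_cancel₀ (sub_ne_zero.2 (by exact_mod_cast hlt.ne'))
  calc (Nat.card (F →g G) : ℚ) = ∑ f : F →g G, 1 := by simp
    _ = ∑ f : F →g G, ∑ v with v ∉ Set.range f,
          ((Fintype.card V : ℚ) - (Set.range f).ncard)⁻¹ := by simp only [hweight]
    _ = ∑ v, ∑ f ∈ {f : F →g G | v ∉ Set.range f},
          ((Fintype.card V : ℚ) - (Set.range f).ncard)⁻¹ :=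
        Finset.sum_comm' fun f v => by simp
    _ = _ := by simp only [weightedHomCount_induce]

theorem SameDeck.card_hom_eq [Finite α] [Fintype V] [Finite W] {G : SimpleGraph V}
    {H : SimpleGraph W} (hdeck : SameDeck G H) (F : SimpleGraph α)
    (hF : Nat.card α < Fintype.card V) : Nat.card (F →g G) = Nat.card (F →g H) := by
  have := Fintype.ofFinite W
  obtain ⟨σ, hσ⟩ := hdeck
  have hcard : Fintype.card V = Fintype.card W := Fintype.card_congr σ
  have hcount : (Nat.card (F →g G) : ℚ) = Nat.card (F →g H) := by
    rw [cast_card_hom_eq_sum_weightedHomCount F G hF,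
      cast_card_hom_eq_sum_weightedHomCount F H (hcard ▸ hF), hcard]
    exact Fintype.sum_equiv σ _ _ fun v => weightedHomCount_congr _ F (hσ v).some
  exact_mod_cast hcount

end Deck

section WalkCounts

variable {V W : Type*} [Fintype V] [Fintype W] {R : Type*} [CommSemiring R]

theorem cast_card_hom_eq_sum_prod {α ι : Type*} [Fintype α] [DecidableEq α] [Fintype ι]
    (F : SimpleGraph α) (G : SimpleGraph V) (a b : ι → α)
    (hF : ∀ x y, F.Adj x y ↔ ∃ i, s(a i, b i) = s(x, y)) :
    (Nat.card (F →g G) : R) = ∑ f : α → V, ∏ i, G.adjMatrix R (f (a i)) (f (b i)) := by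
  have hiff (f : α → V) :
      (∀ i, G.Adj (f (a i)) (f (b i))) ↔ ∀ {x y}, F.Adj x y → G.Adj (f x) (f y) := by
    refine ⟨fun h x y hxy => ?_, fun h i => h ((hF _ _).2 ⟨i, rfl⟩)⟩
    obtain ⟨i, hi⟩ := (hF x y).1 hxy
    obtain ⟨rfl, rfl⟩ | ⟨rfl, rfl⟩ := Sym2.eq_iff.1 hi
    exacts [h i, (h i).symm]
  let homEquiv : (F →g G) ≃ {f : α → V // ∀ i, G.Adj (f (a i)) (f (b i))} :=
    { toFun := fun f => ⟨f, (hiff f).2 f.map_rel⟩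
      invFun := fun f => ⟨f, (hiff f).1 f.2⟩ }
  rw [Nat.card_congr homEquiv, Nat.card_eq_fintype_card, Fintype.card_subtype]
  simp only [SimpleGraph.adjMatrix_apply, Fintype.prod_boole, Finset.sum_boole]

variable [DecidableEq V] [DecidableEq W]

theorem sum_prod_castSucc_succ_mul (A : Matrix V V R) (k : ℕ) (g : V → V → R) :
    ∑ f : Fin (k + 1) → V, (∏ i : Fin k, A (f i.castSucc) (f i.succ)) * g (f 0) (f (Fin.last k)) =
      ∑ x, ∑ y, (A ^ k) x y * g x y := by
  induction k generalizing g with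
  | zero =>
    rw [Fintype.sum_equiv (Equiv.funUnique (Fin 1) V) _ (fun x => g x x) fun f => by simp]
    simp [Matrix.one_apply]
  | succ k ih =>
    rw [← (Fin.consEquiv fun _ => V).sum_comp, Fintype.sum_prod_type]
    refine Finset.sum_congr rfl fun x _ => ?_
    calc
      _ = ∑ f : Fin (k + 1) → V, (∏ i : Fin k, A (f i.castSucc) (f i.succ)) *
            (A x (f 0) * g x (f (Fin.last k))) := by
        refine Finset.sum_congr rfl fun f _ => ?_
        simp only [Fin.consEquiv, Equiv.coe_fn_mk, Fin.prod_univ_succ, Fin.castSucc_zero,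
          Fin.cons_zero, Fin.cons_succ, ← Fin.succ_castSucc, ← Fin.succ_last]
        ring
      _ = ∑ y, ∑ z, (A ^ k) z y * (A x z * g x y) := by
        rw [ih fun z y => A x z * g x y, Finset.sum_comm]
      _ = _ := by
        simp only [pow_succ', Matrix.mul_apply, Finset.sum_mul]
        exact Finset.sum_congr rfl fun y _ => Finset.sum_congr rfl fun z _ => by ring

theorem sum_pow_adjMatrix (G : SimpleGraph V) (k : ℕ) :
    ∑ x, ∑ y, (G.adjMatrix R ^ k) x y = Nat.card (SimpleGraph.pathGraph (k + 1) →g G) := by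
  rw [cast_card_hom_eq_sum_prod _ G (Fin.castSucc (n := k)) Fin.succ]
  · simpa using (sum_prod_castSucc_succ_mul (G.adjMatrix R) k fun _ _ => 1).symm
  · intro x y
    simp only [SimpleGraph.pathGraph_adj, Sym2.eq_iff, Fin.ext_iff, Fin.val_castSucc, Fin.val_succ]
    constructor
    · rintro (h | h)
      exacts [⟨⟨x, by omega⟩, by grind⟩, ⟨⟨y, by omega⟩, by grind⟩]
    · grind

theorem trace_pow_adjMatrix (G : SimpleGraph V) (k : ℕ) :
    (G.adjMatrix R ^ (k + 2)).trace = Nat.card (SimpleGraph.cycleGraph (k + 2) →g G) := by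
  rw [cast_card_hom_eq_sum_prod _ G id (· + 1)]
  · calc
      _ = ∑ x, ∑ y, (G.adjMatrix R ^ (k + 1)) x y * G.adjMatrix R y x := by
        simp only [pow_succ _ (k + 1), Matrix.trace, Matrix.diag, Matrix.mul_apply]
      _ = _ := by
        rw [← sum_prod_castSucc_succ_mul _ (k + 1) fun x y => G.adjMatrix R y x]
        simp only [id, Fin.prod_univ_castSucc (n := k + 1), Fin.coeSucc_eq_succ, Fin.last_add_one]
  · intro x y
    simp only [SimpleGraph.cycleGraph_adj, Sym2.eq_iff, sub_eq_iff_eq_add, id]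
    grind

theorem SameDeck.sum_pow_adjMatrix_eq {G : SimpleGraph V} {H : SimpleGraph W}
    (h : SameDeck G H) {k : ℕ} (hk : k + 1 < Fintype.card V) :
    ∑ x, ∑ y, (G.adjMatrix R ^ k) x y = ∑ x, ∑ y, (H.adjMatrix R ^ k) x y := by
  rw [sum_pow_adjMatrix, sum_pow_adjMatrix, h.card_hom_eq _ (by simpa)]

theorem SameDeck.trace_pow_adjMatrix_eq {G : SimpleGraph V} {H : SimpleGraph W}
    (h : SameDeck G H) {k : ℕ} (hk : k < Fintype.card V) :
    (G.adjMatrix R ^ k).trace = (H.adjMatrix R ^ k).trace := by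
  match k with
  | 0 => simp [Fintype.card_congr h.choose]
  | 1 => simp
  | k + 2 => rw [trace_pow_adjMatrix, trace_pow_adjMatrix, h.card_hom_eq _ (by simpa)]

end WalkCounts

/-! ### Walk generating functions of a bordered matrix -/

section Bordered

variable {V R : Type*}

/-- The adjacency matrix of the graph obtained from one with adjacency matrix `A` by adding a
vertex `none` whose neighbourhood has indicator vector `b`. -/
def bordered [Zero R] (A : Matrix V V R) (b : V → R) : Matrix (Option V) (Option V) R :=
  Matrix.of fun i j => i.elim (j.elim 0 b) fun i => j.elim (b i) (A i)

section Entries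

variable [Zero R] (A : Matrix V V R) (b : V → R) (i j : V)

@[simp]
theorem bordered_some_some : bordered A b (some i) (some j) = A i j := rfl

@[simp]
theorem bordered_some_none : bordered A b (some i) none = b i := rfl

@[simp]
theorem bordered_none_some : bordered A b none (some j) = b j := rfl

@[simp]
theorem bordered_none_none : bordered A b none none = 0 := rfl

end Entries

end Bordered

section WalkSeries

open PowerSeries

variable {V R : Type*} [Fintype V] [DecidableEq V] [CommRing R]

/-- The matrix `(1 - X A)⁻¹ = ∑ₖ Xᵏ Aᵏ` of walk generating functions of `A`. -/
def walkSeries (A : Matrix V V R) : Matrix V V R⟦X⟧ :=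
  Matrix.of fun i j => PowerSeries.mk fun k => (A ^ k) i j

@[simp]
theorem coeff_walkSeries (A : Matrix V V R) (i j : V) (k : ℕ) :
    coeff k (walkSeries A i j) = (A ^ k) i j := by
  simp [walkSeries]

theorem coeff_trace_walkSeries (A : Matrix V V R) (k : ℕ) :
    coeff k (walkSeries A).trace = (A ^ k).trace := by
  simp [Matrix.trace]

theorem coeff_sum_walkSeries (A : Matrix V V R) (k : ℕ) :
    coeff k (∑ i, ∑ j, walkSeries A i j) = ∑ i, ∑ j, (A ^ k) i j := by
  simp

theorem walkSeries_eq_one_add (A : Matrix V V R) :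
    walkSeries A = 1 + (X : R⟦X⟧) • (A.map C * walkSeries A) := by
  ext i j k
  cases k with
  | zero => by_cases hij : i = j <;> simp [hij]
  | succ k =>
    by_cases hij : i = j <;>
      simp [hij, coeff_succ_X_mul, Matrix.mul_apply, pow_succ', coeff_one]

theorem walkSeries_apply_eq_add (A : Matrix V V R) (i j : V) :
    walkSeries A i j =
      (1 : Matrix V V R⟦X⟧) i j + X * ∑ l, C (A i l) * walkSeries A l j := by
  simpa [Matrix.mul_apply] using congr_fun₂ (walkSeries_eq_one_add A) i j

theorem eq_walkSeries {A : Matrix V V R} {N : Matrix V V R⟦X⟧}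
    (hN : N = 1 + (X : R⟦X⟧) • (A.map C * N)) : N = walkSeries A := by
  have hinv {M : Matrix V V R⟦X⟧} (hM : M = 1 + (X : R⟦X⟧) • (A.map C * M)) :
      (1 - (X : R⟦X⟧) • A.map C) * M = 1 := by
    rw [sub_mul, one_mul, Matrix.smul_mul, sub_eq_iff_eq_add]
    exact hM
  have hleft := mul_eq_one_comm.1 (hinv (walkSeries_eq_one_add A))
  exact (left_inv_eq_right_inv hleft (hinv hN)).symm

/-- The generating functions `∑ₖ Xᵏ (Aᵏ b)ᵢ` of walks weighted by `b` at their end. -/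
def walkVecSeries (A : Matrix V V R) (b : V → R) (i : V) : R⟦X⟧ :=
  PowerSeries.mk fun k => (A ^ k *ᵥ b) i

@[simp]
theorem coeff_walkVecSeries (A : Matrix V V R) (b : V → R) (i : V) (k : ℕ) :
    coeff k (walkVecSeries A b i) = (A ^ k *ᵥ b) i := by
  simp [walkVecSeries]

theorem sum_C_mul_walkSeries {A : Matrix V V R} (hA : A.IsSymm) (b : V → R) (j : V) :
    ∑ i, C (b i) * walkSeries A i j = walkVecSeries A b j := by
  ext k
  simp [Matrix.mulVec, dotProduct, (hA.pow k).apply j, mul_comm]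

theorem walkVecSeries_eq_add (A : Matrix V V R) (b : V → R) (i : V) :
    walkVecSeries A b i = C (b i) + X * ∑ j, C (A i j) * walkVecSeries A b j := by
  ext k
  cases k with
  | zero => simp
  | succ k =>
    rw [coeff_walkVecSeries, pow_succ', ← Matrix.mulVec_mulVec]
    simp [coeff_succ_X_mul, Matrix.mulVec_eq_sum]

/-- The generating function `∑ₖ Xᵏ bᵀAᵏb`; times `X²`, it counts the closed walks from a new vertex
with neighbourhood `b` that return there only at their end. -/
def returnSeries (A : Matrix V V R) (b : V → R) : R⟦X⟧ :=
  ∑ i, C (b i) * walkVecSeries A b i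

/-- The Schur complement `1 - X² bᵀ(1 - X A)⁻¹b` of `1 - X A` in `1 - X (bordered A b)`. -/
def schurSeries (A : Matrix V V R) (b : V → R) : R⟦X⟧ :=
  1 - X ^ 2 * returnSeries A b

theorem constantCoeff_schurSeries (A : Matrix V V R) (b : V → R) :
    constantCoeff (schurSeries A b) = 1 := by
  simp [schurSeries]

-- `bᵀ A^p A^q b` depends on `p + q` only, which takes each value `k` exactly `k + 1` times.
theorem sum_walkVecSeries_sq {A : Matrix V V R} (hA : A.IsSymm) (b : V → R) :
    ∑ i, walkVecSeries A b i ^ 2 = derivative R (X * returnSeries A b) := by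
  ext k
  calc
    _ = ∑ p ∈ Finset.HasAntidiagonal.antidiagonal k, (A ^ p.1 *ᵥ b) ⬝ᵥ (A ^ p.2 *ᵥ b) := by
      simp only [map_sum, sq, coeff_mul, coeff_walkVecSeries, dotProduct]
      exact Finset.sum_comm
    _ = ∑ _p ∈ Finset.HasAntidiagonal.antidiagonal k, b ⬝ᵥ (A ^ k *ᵥ b) := by
      refine Finset.sum_congr rfl fun _ hp => ?_
      rw [← Matrix.vecMul_transpose, ← Matrix.dotProduct_mulVec, (hA.pow _).eq,
        Matrix.mulVec_mulVec, ← pow_add, Finset.HasAntidiagonal.mem_antidiagonal.1 hp]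
    _ = _ := by
      rw [coeff_derivative, coeff_succ_X_mul]
      simp [returnSeries, dotProduct, mul_comm]

end WalkSeries

section Bordering

open PowerSeries

variable {V K : Type*} [Fintype V] [DecidableEq V] [Field K] {A : Matrix V V K}

theorem schurSeries_mul_inv (A : Matrix V V K) (b : V → K) :
    schurSeries A b * (schurSeries A b)⁻¹ = 1 :=
  PowerSeries.mul_inv_cancel _ (by simp [constantCoeff_schurSeries])

theorem walkSeries_bordered (hA : A.IsSymm) (b : V → K) :
    walkSeries (bordered A b) = Matrix.of fun i j => i.elim
      (j.elim (schurSeries A b)⁻¹ fun j => X * (schurSeries A b)⁻¹ * walkVecSeries A b j)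
      fun i => j.elim (X * (schurSeries A b)⁻¹ * walkVecSeries A b i) fun j =>
        walkSeries A i j +
          X ^ 2 * (schurSeries A b)⁻¹ * walkVecSeries A b i * walkVecSeries A b j := by
  set u := walkVecSeries A b
  have hu (i : V) : u i = C (b i) + X * ∑ l, C (A i l) * u l := walkVecSeries_eq_add A b i
  have hschur := schurSeries_mul_inv A b
  set E := (schurSeries A b)⁻¹
  rw [schurSeries, returnSeries] at hschur
  have hcol (a : V → K) :
      ∑ l, C (a l) * (X * E * u l) = X * E * ∑ l, C (a l) * u l := by
    rw [Finset.mul_sum]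
    exact Finset.sum_congr rfl fun l _ => by ring
  have hblock (a : V → K) (j : V) :
      ∑ l, C (a l) * (walkSeries A l j + X ^ 2 * E * u l * u j) =
        ∑ l, C (a l) * walkSeries A l j + X ^ 2 * E * u j * ∑ l, C (a l) * u l := by
    rw [Finset.mul_sum, ← Finset.sum_add_distrib]
    exact Finset.sum_congr rfl fun l _ => by ring
  symm
  apply eq_walkSeries
  ext1 i j
  rcases i with _ | i <;> rcases j with _ | j <;>
    simp only [Matrix.of_apply, Option.elim_none, Option.elim_some, Matrix.add_apply,
      Matrix.smul_apply, smul_eq_mul, Matrix.mul_apply, Matrix.map_apply, Fintype.sum_option,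
      bordered_none_none, bordered_none_some, bordered_some_none, bordered_some_some, map_zero,
      hcol, hblock, Matrix.one_apply_eq, Matrix.one_apply, Option.some_inj, reduceCtorEq, if_false]
  · linear_combination hschur
  · rw [sum_C_mul_walkSeries hA]
    linear_combination X * u j * hschur
  · linear_combination X * E * hu i
  · rw [← Matrix.one_apply]
    linear_combination walkSeries_apply_eq_add A i j + X ^ 2 * E * u j * hu i

theorem trace_walkSeries_bordered (hA : A.IsSymm) (b : V → K) :
    (walkSeries (bordered A b)).trace = (walkSeries A).trace + 1 -
      X * derivative K (schurSeries A b) * (schurSeries A b)⁻¹ := by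
  have hderiv : X * derivative K (schurSeries A b) =
      -X ^ 2 * (returnSeries A b + ∑ i, walkVecSeries A b i ^ 2) := by
    rw [sum_walkVecSeries_sq hA, schurSeries]
    simp only [map_sub, Derivation.map_one_eq_zero, Derivation.leibniz, smul_eq_mul,
      Derivation.leibniz_pow, Nat.add_one_sub_one, pow_one, derivative_X, mul_one, nsmul_eq_mul,
      Nat.cast_ofNat, zero_sub, neg_add_rev, neg_mul]
    ring
  have htrace : (walkSeries (bordered A b)).trace = (schurSeries A b)⁻¹ + (walkSeries A).trace +
      X ^ 2 * (schurSeries A b)⁻¹ * ∑ i, walkVecSeries A b i ^ 2 := by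
    rw [walkSeries_bordered hA]
    simp only [Matrix.trace, Matrix.diag, Fintype.sum_option, Matrix.of_apply, Option.elim_none,
      Option.elim_some, Finset.sum_add_distrib, Finset.mul_sum, add_assoc, mul_assoc, sq]
  have hschur := schurSeries_mul_inv A b
  rw [htrace, hderiv]
  rw [schurSeries] at hschur ⊢
  linear_combination hschur

theorem sum_walkSeries_bordered (hA : A.IsSymm) (b : V → K) :
    ∑ i, ∑ j, walkSeries (bordered A b) i j = ∑ i, ∑ j, walkSeries A i j +
      (schurSeries A b)⁻¹ * (1 + X * ∑ i, walkVecSeries A b i) ^ 2 := by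
  rw [walkSeries_bordered hA]
  simp only [Fintype.sum_option, Matrix.of_apply, Option.elim_none, Option.elim_some,
    Finset.sum_add_distrib, ← Finset.mul_sum, ← Finset.sum_mul]
  ring

end Bordering

section Congruence

open PowerSeries

variable {K : Type*} [Field K] {N : ℕ}

theorem X_pow_dvd_sub_of_sq [NeZero (2 : K)] {f g : K⟦X⟧} (hf : constantCoeff f = 1)
    (hg : constantCoeff g = 1) (h : X ^ N ∣ f ^ 2 - g ^ 2) : X ^ N ∣ f - g := by
  have hunit : IsUnit (f + g) := by
    rw [isUnit_iff_constantCoeff, map_add, hf, hg, one_add_one_eq_two]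
    exact isUnit_iff_ne_zero.2 two_ne_zero
  rw [sq_sub_sq, mul_comm] at h
  exact (hunit.dvd_mul_right).1 h

-- The logarithmic derivative of `f / g` vanishes modulo `X ^ N`, so `f / g` is `1` modulo `X ^ N`.
theorem X_pow_dvd_sub_of_logDeriv [CharZero K] {f g : K⟦X⟧} (hf : constantCoeff f = 1)
    (hg : constantCoeff g = 1)
    (h : X ^ N ∣ X * derivative K f * f⁻¹ - X * derivative K g * g⁻¹) : X ^ N ∣ f - g := by
  have hfinv : f * f⁻¹ = 1 := PowerSeries.mul_inv_cancel f (by simp [hf])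
  have hginv : g * g⁻¹ = 1 := PowerSeries.mul_inv_cancel g (by simp [hg])
  have hquot : X ^ N ∣ X * derivative K (f * g⁻¹) := by
    have hfactor : X * derivative K (f * g⁻¹) =
        (X * derivative K f * f⁻¹ - X * derivative K g * g⁻¹) * (f * g⁻¹) := by
      simp only [Derivation.leibniz, derivative_inv', smul_eq_mul]
      linear_combination (-X * derivative K f * g⁻¹) * hfinv
    exact hfactor ▸ h.mul_right _
  have hcoeff : X ^ N ∣ f * g⁻¹ - 1 := by
    rw [X_pow_dvd_iff] at hquot ⊢
    rintro (_ | k) hk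
    · simp [hf, hg]
    · have hderiv := hquot (k + 1) hk
      rw [coeff_succ_X_mul, coeff_derivative] at hderiv
      rw [map_sub, coeff_one, if_neg k.succ_ne_zero, sub_zero]
      exact (mul_eq_zero.1 hderiv).resolve_right (by exact_mod_cast k.succ_ne_zero)
  have hsub : f - g = (f * g⁻¹ - 1) * g := by linear_combination -f * hginv
  exact hsub ▸ hcoeff.mul_right g

end Congruence

section Agreement

open PowerSeries

variable {V K : Type*} [Fintype V] [DecidableEq V] [Field K] [CharZero K] {A : Matrix V V K}
  {b c : V → K} {N : ℕ}

theorem X_pow_dvd_schurSeries_sub (hA : A.IsSymm)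
    (htrace : ∀ k < N, (bordered A b ^ k).trace = (bordered A c ^ k).trace) :
    X ^ N ∣ schurSeries A b - schurSeries A c := by
  refine X_pow_dvd_sub_of_logDeriv (constantCoeff_schurSeries A b)
    (constantCoeff_schurSeries A c) (dvd_sub_comm.1 ?_)
  have hsub : X ^ N ∣ (walkSeries (bordered A b)).trace - (walkSeries (bordered A c)).trace :=
    X_pow_dvd_iff.2 fun k hk => by
      rw [map_sub, coeff_trace_walkSeries, coeff_trace_walkSeries, htrace k hk, sub_self]
  rwa [trace_walkSeries_bordered hA, trace_walkSeries_bordered hA, sub_sub_sub_cancel_left] at hsub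

theorem X_pow_dvd_sum_walkVecSeries_sub (hA : A.IsSymm)
    (htrace : ∀ k < N, (bordered A b ^ k).trace = (bordered A c ^ k).trace)
    (hsum : ∀ k < N, ∑ i, ∑ j, (bordered A b ^ k) i j = ∑ i, ∑ j, (bordered A c ^ k) i j) :
    X ^ N ∣ X * (∑ i, walkVecSeries A b i - ∑ i, walkVecSeries A c i) := by
  have hschur := X_pow_dvd_schurSeries_sub hA htrace
  have hdiff : X ^ N ∣
      (schurSeries A b)⁻¹ * (1 + X * ∑ i, walkVecSeries A b i) ^ 2 -
        (schurSeries A c)⁻¹ * (1 + X * ∑ i, walkVecSeries A c i) ^ 2 := by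
    rw [← add_sub_add_left_eq_sub _ _ (∑ i, ∑ j, walkSeries A i j), ← sum_walkSeries_bordered hA,
      ← sum_walkSeries_bordered hA, X_pow_dvd_iff]
    intro k hk
    rw [map_sub, coeff_sum_walkSeries, coeff_sum_walkSeries, hsum k hk, sub_self]
  have hsq : X ^ N ∣ (1 + X * ∑ i, walkVecSeries A b i) ^ 2 -
      (1 + X * ∑ i, walkVecSeries A c i) ^ 2 := by
    convert (hdiff.mul_left (schurSeries A b)).add (hschur.mul_right
      ((schurSeries A c)⁻¹ * (1 + X * ∑ i, walkVecSeries A c i) ^ 2)) using 1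
    linear_combination
      -(1 + X * ∑ i, walkVecSeries A b i) ^ 2 * schurSeries_mul_inv A b +
        (1 + X * ∑ i, walkVecSeries A c i) ^ 2 * schurSeries_mul_inv A c
  simpa [← mul_sub] using X_pow_dvd_sub_of_sq (by simp) (by simp) hsq

theorem sum_pow_mulVec_eq_of_bordered (hA : A.IsSymm)
    (htrace : ∀ k < N, (bordered A b ^ k).trace = (bordered A c ^ k).trace)
    (hsum : ∀ k < N, ∑ i, ∑ j, (bordered A b ^ k) i j = ∑ i, ∑ j, (bordered A c ^ k) i j)
    {k : ℕ} (hk : k + 1 < N) : ∑ i, (A ^ k *ᵥ b) i = ∑ i, (A ^ k *ᵥ c) i := by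
  have hcoeff := X_pow_dvd_iff.1 (X_pow_dvd_sum_walkVecSeries_sub hA htrace hsum) (k + 1) hk
  simpa [coeff_succ_X_mul, sub_eq_zero] using hcoeff

end Agreement

/-! ### The kernel of the walk matrix -/

section Krylov

variable {K M : Type*} [Field K] [AddCommGroup M] [Module K M]

theorem pow_apply_mem_span_of_not_linearIndependent (f : Module.End K M) (x : M) {n : ℕ}
    (h : ¬ LinearIndependent K fun i : Fin (n + 1) => (f ^ (i : ℕ)) x) :
    (f ^ n) x ∈ Submodule.span K ((fun i : ℕ => (f ^ i) x) '' Set.Iio n) := by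
  induction n with
  | zero =>
    have hx : x = 0 := by simpa using h
    simp [hx]
  | succ n ih =>
    have himage : Set.range (fun i : Fin (n + 1) => (f ^ (i : ℕ)) x) =
        (fun i : ℕ => (f ^ i) x) '' Set.Iio (n + 1) := by
      rw [← Fin.range_val, ← Set.range_comp]
      rfl
    by_cases hind : LinearIndependent K fun i : Fin (n + 1) => (f ^ (i : ℕ)) x
    · rw [linearIndependent_finSucc'] at h
      rw [← himage]
      by_contra hspan
      exact h ⟨hind, hspan⟩
    · have hmap := Submodule.mem_map_of_mem (f := f) (ih hind)
      rw [Submodule.map_span, ← Set.image_comp, ← Module.End.mul_apply, ← pow_succ'] at hmap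
      refine Submodule.span_mono ?_ hmap
      rintro _ ⟨i, hi, rfl⟩
      exact ⟨i + 1, Nat.succ_lt_succ hi, by simp [pow_succ']⟩

end Krylov

section KernelLine

variable {K m n : Type*} [Field K] [Fintype n]

theorem exists_eq_smul_of_mulVec_eq_zero {M : Matrix m n K}
    (hrank : M.rank + 1 = Fintype.card n) {x y : n → K} (hx : M *ᵥ x = 0) (hx0 : x ≠ 0)
    (hy : M *ᵥ y = 0) : ∃ t : K, y = t • x := by
  have hker : Module.finrank K (LinearMap.ker M.mulVecLin) = 1 := by
    have hnullity := M.mulVecLin.finrank_range_add_finrank_ker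
    rw [Module.finrank_fintype_fun_eq_card, ← hrank] at hnullity
    exact Nat.add_left_cancel hnullity
  obtain ⟨t, ht⟩ := (finrank_eq_one_iff_of_nonzero' (⟨x, hx⟩ : LinearMap.ker M.mulVecLin)
    (by simpa [Subtype.ext_iff] using hx0)).1 hker ⟨y, hy⟩
  exact ⟨t, (congr_arg Subtype.val ht).symm⟩

end KernelLine

section WalkMatrix

variable {V : Type} [Fintype V] [DecidableEq V]

theorem walkMatrix_transpose_mulVec (A : Matrix V V ℝ) (d : V → ℝ) (j : Fin (Fintype.card V)) :
    ((walkMatrix A)ᵀ *ᵥ d) j = (A ^ (j : ℕ) *ᵥ fun _ => 1) ⬝ᵥ d := rfl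

-- The last column of a rank-deficient walk matrix is a linear combination of the others.
theorem walkMatrix_transpose_mulVec_eq_zero {A : Matrix V V ℝ} {d : V → ℝ}
    (hrank : (walkMatrix A).rank < Fintype.card V)
    (hd : ∀ k, k + 1 < Fintype.card V → (A ^ k *ᵥ fun _ => 1) ⬝ᵥ d = 0) :
    (walkMatrix A)ᵀ *ᵥ d = 0 := by
  obtain ⟨n, hn⟩ : ∃ n, Fintype.card V = n + 1 := Nat.exists_eq_succ_of_ne_zero (by omega)
  set e : V → ℝ := fun _ => 1
  have hpow (k : ℕ) : (A.mulVecLin ^ k) e = A ^ k *ᵥ e := by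
    rw [← Matrix.toLin'_apply', ← Matrix.toLin'_pow, Matrix.toLin'_apply]
  have hdep : ¬ LinearIndependent ℝ fun i : Fin (n + 1) => (A.mulVecLin ^ (i : ℕ)) e := by
    simp only [hpow]
    rw [← hn]
    intro hind
    have hfull := LinearIndependent.rank_matrix (M := (walkMatrix A)ᵀ) hind
    rw [rank_transpose, Fintype.card_fin] at hfull
    exact hrank.ne hfull
  have hlast : (A ^ n *ᵥ e) ⬝ᵥ d = 0 := by
    have hspan := pow_apply_mem_span_of_not_linearIndependent A.mulVecLin e hdep
    rw [hpow] at hspan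
    refine Submodule.span_induction ?_ (zero_dotProduct d)
      (fun x y _ _ hx hy => by rw [add_dotProduct, hx, hy, add_zero])
      (fun t x _ hx => by rw [smul_dotProduct, hx, smul_zero]) hspan
    rintro _ ⟨k, hk, rfl⟩
    simp only [hpow]
    exact hd k (hn ▸ Nat.succ_lt_succ hk)
  ext j
  rw [walkMatrix_transpose_mulVec]
  obtain hj | hj : (j : ℕ) < n ∨ (j : ℕ) = n := by omega
  · exact hd j (by omega)
  · rw [hj]
    exact hlast

end WalkMatrix

section Reflection

variable {m : ℕ} {ξ b c : Fin m → ℝ}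

theorem eq_or_eq_householder_mulVec (hξ : ξ ≠ 0) {t : ℝ} (hbc : b - c = t • ξ)
    (hnorm : b ⬝ᵥ b = c ⬝ᵥ c) : c = b ∨ c = householder ξ *ᵥ b := by
  have hξξ : ξ ⬝ᵥ ξ ≠ 0 := mt dotProduct_self_eq_zero.1 hξ
  obtain rfl : c = b - t • ξ := by rw [← hbc, sub_sub_cancel]
  have ht : t * (2 * (ξ ⬝ᵥ b) - t * (ξ ⬝ᵥ ξ)) = 0 := by
    simp only [sub_dotProduct, dotProduct_sub, smul_dotProduct, dotProduct_smul, smul_eq_mul,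
      dotProduct_comm b ξ] at hnorm
    linear_combination hnorm
  rcases mul_eq_zero.1 ht with rfl | ht
  · simp
  · right
    have ht' : t = 2 / (ξ ⬝ᵥ ξ) * (ξ ⬝ᵥ b) := by field_simp; linear_combination -ht
    rw [householder, sub_mulVec, one_mulVec, smul_mulVec, vecMulVec_mulVec]
    simp [ht', smul_smul]

end Reflection

/-! ### Reconstruction -/

section AddedVertex

variable {V R : Type*}

/-- The indicator vector of the neighbourhood of the vertex `none`. -/
def nbhdIndicator (R : Type*) [Zero R] [One R] (G : SimpleGraph (Option V)) (i : V) : R :=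
  if G.Adj (some i) none then 1 else 0

theorem adjMatrix_eq_bordered [Zero R] [One R] (G : SimpleGraph (Option V)) :
    G.adjMatrix R = bordered ((G.comap some).adjMatrix R) (nbhdIndicator R G) := by
  ext (_ | i) (_ | j) <;> simp [nbhdIndicator, SimpleGraph.adj_comm]

theorem nbhdIndicator_dotProduct_self [Fintype V] [NonAssocSemiring R]
    (G : SimpleGraph (Option V)) :
    nbhdIndicator R G ⬝ᵥ nbhdIndicator R G = ∑ i, nbhdIndicator R G i := by
  refine Finset.sum_congr rfl fun i _ => ?_
  by_cases h : G.Adj (some i) none <;> simp [nbhdIndicator, h]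

theorem eq_of_nbhdIndicator_eq [Zero R] [One R] [NeZero (1 : R)]
    {G H : SimpleGraph (Option V)} (hcomap : G.comap some = H.comap some)
    (hnone : nbhdIndicator R G = nbhdIndicator R H) : G = H := by
  have hsome (i : V) : G.Adj (some i) none ↔ H.Adj (some i) none := by
    have hi := congr_fun hnone i
    by_cases hG : G.Adj (some i) none <;> by_cases hH : H.Adj (some i) none <;>
      simp_all [nbhdIndicator]
  ext (_ | i) (_ | j)
  · simp
  · rw [G.adj_comm, H.adj_comm, hsome]
  · exact hsome i
  · exact iff_of_eq (congr_arg (fun F : SimpleGraph V => F.Adj i j) hcomap)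

end AddedVertex

section Reconstruction

theorem adjMat_eq_adjMatrix {V : Type} [Fintype V] (G : SimpleGraph V) [DecidableRel G.Adj] :
    adjMat G = G.adjMatrix ℝ := by
  ext i j
  simp [adjMat]

variable {V : Type} [Fintype V] [DecidableEq V] {G H : SimpleGraph (Option V)}

theorem SameDeck.walkMatrix_transpose_mulVec_sub_eq_zero (hdeck : SameDeck G H)
    (hcomap : G.comap some = H.comap some)
    (hrank : (walkMatrix (adjMat (G.comap some))).rank < Fintype.card V) :
    (walkMatrix (adjMat (G.comap some)))ᵀ *ᵥ (nbhdIndicator ℝ G - nbhdIndicator ℝ H) = 0 := by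
  refine walkMatrix_transpose_mulVec_eq_zero hrank fun k hk => ?_
  have hsymm : (adjMat (G.comap some)).IsSymm := by
    rw [adjMat_eq_adjMatrix]
    exact SimpleGraph.isSymm_adjMatrix _
  have hG : bordered (adjMat (G.comap some)) (nbhdIndicator ℝ G) = G.adjMatrix ℝ := by
    rw [adjMat_eq_adjMatrix, adjMatrix_eq_bordered]
  have hH : bordered (adjMat (G.comap some)) (nbhdIndicator ℝ H) = H.adjMatrix ℝ := by
    rw [hcomap, adjMat_eq_adjMatrix, adjMatrix_eq_bordered]
  have hsum := sum_pow_mulVec_eq_of_bordered hsymm (b := nbhdIndicator ℝ G)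
    (c := nbhdIndicator ℝ H)
    (fun k hk => by
      rw [hG, hH, hdeck.trace_pow_adjMatrix_eq (by rw [Fintype.card_option]; omega)])
    (fun k hk => by
      rw [hG, hH, hdeck.sum_pow_adjMatrix_eq (by rw [Fintype.card_option]; omega)]) hk
  rw [← Matrix.vecMul_transpose, (hsymm.pow k).eq, ← dotProduct_mulVec, mulVec_sub,
    dotProduct_sub, sub_eq_zero]
  simpa [dotProduct] using hsum

theorem dotProduct_self_eq_of_walkMatrix_transpose_mulVec_sub_eq_zero [Nonempty V]
    {A : Matrix V V ℝ}
    (h : (walkMatrix A)ᵀ *ᵥ (nbhdIndicator ℝ G - nbhdIndicator ℝ H) = 0) :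
    nbhdIndicator ℝ G ⬝ᵥ nbhdIndicator ℝ G = nbhdIndicator ℝ H ⬝ᵥ nbhdIndicator ℝ H := by
  have hcol := congr_fun h ⟨0, Fintype.card_pos⟩
  rw [walkMatrix_transpose_mulVec, Pi.zero_apply, dotProduct_sub, sub_eq_zero] at hcol
  rw [nbhdIndicator_dotProduct_self, nbhdIndicator_dotProduct_self]
  simpa [dotProduct] using hcol

theorem SameDeck.nbhdIndicator_eq_or_eq_householder_mulVec {m : ℕ}
    {G H : SimpleGraph (Option (Fin m))} (hdeck : SameDeck G H)
    (hcomap : G.comap some = H.comap some)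
    (hrank : (walkMatrix (adjMat (G.comap some))).rank = m - 1) {ξ : Fin m → ℝ} (hξ : ξ ≠ 0)
    (hker : (walkMatrix (adjMat (G.comap some)))ᵀ *ᵥ ξ = 0) :
    nbhdIndicator ℝ H = nbhdIndicator ℝ G ∨
      nbhdIndicator ℝ H = householder ξ *ᵥ nbhdIndicator ℝ G := by
  obtain ⟨i, -⟩ := Function.ne_iff.1 hξ
  have hm : m - 1 + 1 = Fintype.card (Fin m) := by
    rw [Fintype.card_fin, Nat.sub_add_cancel i.pos]
  have : Nonempty (Fin m) := ⟨i⟩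
  have hdiff := hdeck.walkMatrix_transpose_mulVec_sub_eq_zero hcomap (by rw [hrank]; omega)
  obtain ⟨t, ht⟩ := exists_eq_smul_of_mulVec_eq_zero (by rw [rank_transpose, hrank, hm]) hker hξ
    hdiff
  exact eq_or_eq_householder_mulVec hξ ht
    (dotProduct_self_eq_of_walkMatrix_transpose_mulVec_sub_eq_zero hdiff)

theorem reconstructible_of_almost_controllable_asymmetric_general
    {m : ℕ} (G : SimpleGraph (Fin (m + 1)))
    (hac : (walkMatrix (adjMat (G.comap (Fin.castSucc : Fin m → Fin (m + 1))))).rank = m - 1)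
    (ξ : Fin m → ℝ) (hξ : ξ ≠ 0)
    (hker : (walkMatrix (adjMat (G.comap (Fin.castSucc : Fin m → Fin (m + 1)))))ᵀ *ᵥ ξ = 0)
    (b : Fin m → ℝ)
    (hb : b = fun i => if G.Adj (Fin.castSucc i) (Fin.last m) then (1 : ℝ) else 0)
    (hQ0b : ¬ ((∀ i, (householder ξ *ᵥ b) i = 0 ∨ (householder ξ *ᵥ b) i = 1)
        ∧ householder ξ *ᵥ b ≠ b)) :
    Reconstructible G := by
  intro H (hdeck : SameDeck G H)
  let e : Option (Fin m) ≃ Fin (m + 1) := finSuccEquivLast.symm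
  obtain ⟨e', hcomap⟩ := hdeck.exists_equiv_comap_some_eq e
  have hG : (G.comap e).comap some = G.comap Fin.castSucc := by
    ext i j
    simp [e]
  have hb' : nbhdIndicator ℝ (G.comap e) = b := by
    ext i
    simp [hb, e, nbhdIndicator]
  have hdeck' : SameDeck (G.comap e) (H.comap e') :=
    (sameDeck_of_iso (SimpleGraph.Iso.comap e G)).trans
      (hdeck.trans (sameDeck_of_iso (SimpleGraph.Iso.comap e' H).symm))
  have hcases := hdeck'.nbhdIndicator_eq_or_eq_householder_mulVec hcomap.symm (hG ▸ hac) hξ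
    (hG ▸ hker)
  rw [hb'] at hcases
  have hc : nbhdIndicator ℝ (H.comap e') = b := by
    refine hcases.elim id fun hQ => ?_
    by_contra hne
    refine hQ0b ⟨fun i => ?_, hQ ▸ hne⟩
    rw [← hQ, nbhdIndicator]
    exact (ite_eq_or_eq _ _ _).symm
  have heq : G.comap e = H.comap e' := eq_of_nbhdIndicator_eq hcomap.symm (hb'.trans hc.symm)
  exact ⟨(SimpleGraph.Iso.comap e G).symm.trans (heq ▸ SimpleGraph.Iso.comap e' H)⟩

end Reconstruction

/-- Theorem 9 (ii). Let `n = m + 1 ≥ 3` and let `G` be a graph on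
`Fin (m+1)` such that `G - uₙ` (the induced subgraph on the first `m` vertices) is almost
controllable, with Householder matrix `Q₀ = Q₀(G - uₙ)` not a permutation matrix. Let `b` be
the neighborhood indicator vector of the last vertex `uₙ`. If `Q₀ b` is not a `(0,1)`-vector
different from `b`, then `G` is reconstructible. -/
theorem reconstructible_of_almost_controllable_asymmetric
    {m : ℕ} (hn : 3 ≤ m + 1) (G : SimpleGraph (Fin (m + 1)))
    (hac : (walkMatrix (adjMat (G.comap (Fin.castSucc : Fin m → Fin (m + 1))))).rank = m - 1)
    (ξ : Fin m → ℝ) (hξ : ξ ≠ 0)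
    (hker : (walkMatrix (adjMat (G.comap (Fin.castSucc : Fin m → Fin (m + 1)))))ᵀ *ᵥ ξ = 0)
    (b : Fin m → ℝ)
    (hb : b = fun i => if G.Adj (Fin.castSucc i) (Fin.last m) then (1 : ℝ) else 0)
    (hnotperm : ¬ IsPermMatrix (householder ξ))
    (hQ0b : ¬ ((∀ i, (householder ξ *ᵥ b) i = 0 ∨ (householder ξ *ᵥ b) i = 1)
        ∧ householder ξ *ᵥ b ≠ b)) :
    Reconstructible G :=
  reconstructible_of_almost_controllable_asymmetric_general G hac ξ hξ hker b hb hQ0b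
end
end
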